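/- Let H be a real Hilbert space and f : H → ℝ be μ-strongly concave with L-Lipschitz (Fréchet) gradient over a closed convex set C. For an index set U and a family f_u of such functions whose gradients are L-Lipschitz in u, the argmax map u ↦ ζ_u := argmax_{ζ∈C} f_u(ζ) is (L/μ)-Lipschitz: ‖ζ_{u₁} − ζ_{u₂}‖ ≤ (L/μ)‖u₁ − u₂‖, where u ranges over a normed space and ‖∇f_{u₁}(ζ) − ∇f_{u₂}(ζ)‖ ≤ L‖u₁ − u₂‖ for all ζ ∈ C. -/

import Mathlib

theorem slope_tendsto_aux {H : Type*} [NormedAddCommGroup H] [InnerProductSpace ℝ H]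
    [CompleteSpace H] {f : H → ℝ} {g x : H} (h : HasGradientAt f g x) (d : H) :
    Filter.Tendsto (fun t : ℝ => t⁻¹ * (f (x + t • d) - f x)) (nhdsWithin 0 (Set.Ioi 0))
      (nhds (inner ℝ g d)) := by
  have h1 : HasDerivAt (fun t : ℝ => x + t • d) d 0 := by
    simpa using ((hasDerivAt_id (0 : ℝ)).smul_const d).const_add x
  have h2 : HasFDerivAt f (InnerProductSpace.toDual ℝ H g) (x + (0 : ℝ) • d) := by
    simpa using h.hasFDerivAt
  have h3 := h2.comp_hasDerivAt (0 : ℝ) h1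
  have h4 := h3.tendsto_slope_zero_right
  simpa using h4

theorem strong_upper_aux {H : Type*} [NormedAddCommGroup H] [InnerProductSpace ℝ H]
    [CompleteSpace H] {C : Set H} {f : H → ℝ} {g x y : H} {μ : ℝ}
    (hc : StrongConcaveOn C μ f) (h : HasGradientAt f g x) (hx : x ∈ C) (hy : y ∈ C) :
    f y - f x + μ / 2 * ‖x - y‖ ^ 2 ≤ inner ℝ g (y - x) := by
  have h0 : Filter.Tendsto (fun t : ℝ => f y - f x + (1 - t) * (μ / 2 * ‖x - y‖ ^ 2))
      (nhdsWithin 0 (Set.Ioi 0)) (nhds (f y - f x + μ / 2 * ‖x - y‖ ^ 2)) := by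
    have : Continuous (fun t : ℝ => f y - f x + (1 - t) * (μ / 2 * ‖x - y‖ ^ 2)) := by
      fun_prop
    have h := this.tendsto 0
    simp only [sub_zero, one_mul] at h
    exact h.mono_left nhdsWithin_le_nhds
  refine le_of_tendsto_of_tendsto h0 (slope_tendsto_aux h (y - x)) ?_
  filter_upwards [Ioo_mem_nhdsGT (zero_lt_one (α := ℝ))] with t ht
  obtain ⟨ht0, ht1⟩ := ht
  have key := hc.2 hx hy (sub_nonneg.2 ht1.le) ht0.le (by ring)
  have e : (1 - t) • x + t • y = x + t • (y - x) := by module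
  rw [e] at key
  simp only [smul_eq_mul] at key
  rw [le_inv_mul_iff₀ ht0]
  linarith

theorem max_first_order_aux {H : Type*} [NormedAddCommGroup H] [InnerProductSpace ℝ H]
    [CompleteSpace H] {C : Set H} {f : H → ℝ} {g x y : H} (hC : Convex ℝ C)
    (h : HasGradientAt f g x) (hx : x ∈ C) (hy : y ∈ C) (hm : IsMaxOn f C x) :
    inner ℝ g (y - x) ≤ 0 := by
  refine le_of_tendsto (slope_tendsto_aux h (y - x)) ?_
  filter_upwards [Ioo_mem_nhdsGT (zero_lt_one (α := ℝ))] with t ht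
  have hmem := hC.add_smul_sub_mem hx hy ⟨ht.1.le, ht.2.le⟩
  have hle : f (x + t • (y - x)) ≤ f x := hm hmem
  exact mul_nonpos_of_nonneg_of_nonpos (inv_nonneg.2 ht.1.le) (by linarith)

theorem argmax_lipschitz_in_parameter
    {H : Type*} [NormedAddCommGroup H] [InnerProductSpace ℝ H] [CompleteSpace H]
    {U : Type*} [NormedAddCommGroup U] [NormedSpace ℝ U]
    (C : Set H) (hCne : C.Nonempty) (hCc : IsClosed C) (hCconv : Convex ℝ C)
    (f : U → H → ℝ) (g : U → H → H)
    (μ L : ℝ) (hμ : 0 < μ) (hL : 0 < L)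
    (hconc : ∀ u : U, StrongConcaveOn C μ (f u))
    (hgrad : ∀ (u : U) (ζ : H), HasGradientAt (f u) (g u ζ) ζ)
    (hLipζ : ∀ (u : U) (ζ ζ' : H), ‖g u ζ - g u ζ'‖ ≤ L * ‖ζ - ζ'‖)
    (hLipu : ∀ (u u' : U) (ζ : H), ζ ∈ C → ‖g u ζ - g u' ζ‖ ≤ L * ‖u - u'‖)
    (ζm : U → H)
    (hζm : ∀ u : U, ζm u ∈ C ∧ IsMaxOn (f u) C (ζm u)) :
    ∀ u₁ u₂ : U, ‖ζm u₁ - ζm u₂‖ ≤ (L / μ) * ‖u₁ - u₂‖ := by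
  intro u₁ u₂
  obtain ⟨ha, hma⟩ := hζm u₁
  obtain ⟨hb, hmb⟩ := hζm u₂
  have A1 := strong_upper_aux (hconc u₁) (hgrad u₁ _) ha hb
  have A2 := strong_upper_aux (hconc u₁) (hgrad u₁ _) hb ha
  have B1 := max_first_order_aux hCconv (hgrad u₁ _) ha hb hma
  have B2 := max_first_order_aux hCconv (hgrad u₂ _) hb ha hmb
  have hi := real_inner_le_norm (g u₁ (ζm u₂) - g u₂ (ζm u₂)) (ζm u₁ - ζm u₂)
  rw [inner_sub_left] at hi
  have hl := mul_le_mul_of_nonneg_right (hLipu u₁ u₂ (ζm u₂) hb) (norm_nonneg (ζm u₁ - ζm u₂))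
  rw [norm_sub_rev (ζm u₂) (ζm u₁)] at A2
  have hfin : μ * ‖ζm u₁ - ζm u₂‖ ^ 2 ≤ L * ‖u₁ - u₂‖ * ‖ζm u₁ - ζm u₂‖ := by linarith
  rw [div_mul_eq_mul_div, le_div_iff₀ hμ]
  rcases (norm_nonneg (ζm u₁ - ζm u₂)).eq_or_lt with h0 | h0
  · rw [← h0, zero_mul]
    positivity
  · refine le_of_mul_le_mul_right ?_ h0
    linarith
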